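/- For all integrable real random variables η¹ and η², one has |L(η¹) − L(η²)| ≤ κ 𝐄[|η¹ − η²|]. -/

import Mathlib

open MeasureTheory Filter Topology

/-- The operator `L(η) := inf {x ≥ 0 : 𝐄[ℓ(·, x+η)] ≥ 0}`. -/
noncomputable def Lop {Ω : Type*} [MeasurableSpace Ω] (P : Measure Ω)
    (ℓ : Ω → ℝ → ℝ) (η : Ω → ℝ) : ℝ :=
  sInf {x : ℝ | 0 ≤ x ∧ 0 ≤ ∫ ω, ℓ ω (x + η ω) ∂P}

/-!
Write `F_η x = 𝐄[ℓ(·, x + η)]`, so that `L(η)` is the first `x ≥ 0` with `0 ≤ F_η x`. Integrating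
the two bi-Lipschitz bounds on `ℓ(ω, ·)` shows that `F_η` has slope at least `C`, and that `F_η` and
`F_ξ` are uniformly within `κ * C * 𝐄[|η - ξ|]` of each other. Two functions of slope at least `a`
that are uniformly within `b` of each other become nonnegative within `b / a` of each other.
-/

section FirstNonneg

/-- The first point of `[0, ∞)` at which `f` is nonnegative: `L(η)` is `firstNonneg` of the
function `x ↦ 𝐄[ℓ(·, x + η)]`. It is encoded as an infimum, so it need not be attained for
discontinuous `f`, and it has the junk value `0` if `f` is negative on all of `[0, ∞)`. -/
noncomputable def firstNonneg (f : ℝ → ℝ) : ℝ :=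
  sInf {x | 0 ≤ x ∧ 0 ≤ f x}

variable {f g : ℝ → ℝ} {a b : ℝ}

theorem firstNonneg_le {x : ℝ} (hx : 0 ≤ x) (hfx : 0 ≤ f x) : firstNonneg f ≤ x :=
  csInf_le ⟨0, fun _ hy ↦ hy.1⟩ ⟨hx, hfx⟩

theorem exists_nonneg_of_mul_sub_le (ha : 0 < a)
    (hf : ∀ ⦃x y⦄, x ≤ y → a * (y - x) ≤ f y - f x) : ∃ x, 0 ≤ x ∧ 0 ≤ f x := by
  have hx : 0 ≤ |f 0| / a := by positivity
  refine ⟨|f 0| / a, hx, ?_⟩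
  have hslope : |f 0| ≤ f (|f 0| / a) - f 0 := by
    simpa only [sub_zero, mul_div_cancel₀ _ ha.ne'] using hf hx
  linarith [neg_abs_le (f 0)]

theorem firstNonneg_le_add_div (ha : 0 < a) (hb : 0 ≤ b)
    (hf : ∀ ⦃x y⦄, x ≤ y → a * (y - x) ≤ f y - f x)
    (hg : ∃ x, 0 ≤ x ∧ 0 ≤ g x) (hfg : ∀ x, g x - f x ≤ b) :
    firstNonneg f ≤ firstNonneg g + b / a := by
  rw [← sub_le_iff_le_add]
  refine le_csInf hg fun x ⟨hx, hgx⟩ ↦ sub_le_iff_le_add.2 ?_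
  have hba : 0 ≤ b / a := by positivity
  have hslope : b ≤ f (x + b / a) - f x := by
    simpa only [add_sub_cancel_left, mul_div_cancel₀ _ ha.ne'] using
      hf (le_add_of_nonneg_right hba : x ≤ x + b / a)
  exact firstNonneg_le (add_nonneg hx hba) (by linarith [hfg x])

theorem abs_firstNonneg_sub_firstNonneg_le (ha : 0 < a)
    (hf : ∀ ⦃x y⦄, x ≤ y → a * (y - x) ≤ f y - f x)
    (hg : ∀ ⦃x y⦄, x ≤ y → a * (y - x) ≤ g y - g x) (hfg : ∀ x, |f x - g x| ≤ b) :
    |firstNonneg f - firstNonneg g| ≤ b / a := by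
  have hb : 0 ≤ b := (abs_nonneg _).trans (hfg 0)
  have hle : firstNonneg f ≤ firstNonneg g + b / a :=
    firstNonneg_le_add_div ha hb hf (exists_nonneg_of_mul_sub_le ha hg)
      fun x ↦ (abs_sub_le_iff.1 (hfg x)).2
  have hge : firstNonneg g ≤ firstNonneg f + b / a :=
    firstNonneg_le_add_div ha hb hg (exists_nonneg_of_mul_sub_le ha hf)
      fun x ↦ (abs_sub_le_iff.1 (hfg x)).1
  exact abs_sub_le_iff.2 ⟨sub_le_iff_le_add'.2 hle, sub_le_iff_le_add'.2 hge⟩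

end FirstNonneg

section RandomLipschitz

variable {Ω E F : Type*} [MeasurableSpace Ω] {μ : Measure Ω}
  [NormedAddCommGroup E] [NormedAddCommGroup F]
  {ℓ : Ω → E → F} {η ξ : Ω → E} {K : ℝ}

theorem integrable_comp_of_norm_sub_le [MeasurableSpace E] [BorelSpace E]
    (hmeas : StronglyMeasurable fun p : Ω × E ↦ ℓ p.1 p.2)
    (hzero : Integrable (ℓ · 0) μ) (hlip : ∀ ω y z, ‖ℓ ω y - ℓ ω z‖ ≤ K * ‖y - z‖)
    (hη : Integrable η μ) : Integrable (fun ω ↦ ℓ ω (η ω)) μ := by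
  have hcomp : AEStronglyMeasurable (fun ω ↦ ℓ ω (η ω)) μ :=
    (hmeas.aestronglyMeasurable (μ := μ.map fun ω ↦ (ω, η ω))).comp_aemeasurable
      (aemeasurable_id.prodMk hη.aemeasurable)
  refine (hzero.norm.add (hη.norm.const_mul K)).mono' hcomp (Eventually.of_forall fun ω ↦ ?_)
  calc ‖ℓ ω (η ω)‖ ≤ ‖ℓ ω 0‖ + ‖ℓ ω (η ω) - ℓ ω 0‖ := norm_le_norm_add_norm_sub' _ _
    _ ≤ ‖ℓ ω 0‖ + K * ‖η ω‖ := by simpa using hlip ω (η ω) 0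

theorem norm_integral_comp_sub_integral_comp_le [NormedSpace ℝ F]
    (hlip : ∀ ω y z, ‖ℓ ω y - ℓ ω z‖ ≤ K * ‖y - z‖) (hηξ : Integrable (η - ξ) μ)
    (hℓη : Integrable (fun ω ↦ ℓ ω (η ω)) μ) (hℓξ : Integrable (fun ω ↦ ℓ ω (ξ ω)) μ) :
    ‖∫ ω, ℓ ω (η ω) ∂μ - ∫ ω, ℓ ω (ξ ω) ∂μ‖ ≤ K * ∫ ω, ‖η ω - ξ ω‖ ∂μ := by
  rw [← integral_sub hℓη hℓξ, ← integral_const_mul]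
  exact norm_integral_le_of_norm_le (hηξ.norm.const_mul K)
    (Eventually.of_forall fun ω ↦ hlip ω (η ω) (ξ ω))

end RandomLipschitz

theorem mul_sub_le_sub_of_mul_abs_sub_le {f : ℝ → ℝ} {c : ℝ} (hf : Monotone f)
    (hc : ∀ x y, c * |x - y| ≤ |f x - f y|) ⦃x y : ℝ⦄ (hxy : x ≤ y) :
    c * (y - x) ≤ f y - f x := by
  simpa only [abs_of_nonneg (sub_nonneg.2 hxy), abs_of_nonneg (sub_nonneg.2 (hf hxy))] using hc y x

section FiniteMeasure

variable {Ω : Type*} [MeasurableSpace Ω] {μ : Measure Ω} [IsFiniteMeasure μ] {ℓ : Ω → ℝ → ℝ}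

theorem mul_sub_le_integral_sub_integral {η : Ω → ℝ} {c : ℝ}
    (hslope : ∀ ω ⦃x y⦄, x ≤ y → c * (y - x) ≤ ℓ ω y - ℓ ω x)
    (hint : ∀ x, Integrable (fun ω ↦ ℓ ω (x + η ω)) μ) ⦃x y : ℝ⦄ (hxy : x ≤ y) :
    c * μ.real Set.univ * (y - x) ≤ ∫ ω, ℓ ω (y + η ω) ∂μ - ∫ ω, ℓ ω (x + η ω) ∂μ :=
  calc c * μ.real Set.univ * (y - x) = ∫ _, c * (y - x) ∂μ := by
        rw [integral_const, smul_eq_mul]; ring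
    _ ≤ ∫ ω, (ℓ ω (y + η ω) - ℓ ω (x + η ω)) ∂μ :=
        integral_mono (integrable_const _) ((hint y).sub (hint x)) fun ω ↦ by
          simpa only [add_sub_add_right_eq_sub] using hslope ω (by gcongr : x + η ω ≤ y + η ω)
    _ = ∫ ω, ℓ ω (y + η ω) ∂μ - ∫ ω, ℓ ω (x + η ω) ∂μ := integral_sub (hint y) (hint x)

theorem stmt2_general (hmeas : Measurable fun p : Ω × ℝ ↦ ℓ p.1 p.2)
    (hmono : ∀ ω, Monotone (ℓ ω)) (hzero : Integrable (ℓ · 0) μ) {κ C : ℝ} (hC : 0 < C)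
    (hbilip : ∀ ω y₁ y₂, C * |y₁ - y₂| ≤ |ℓ ω y₁ - ℓ ω y₂| ∧
      |ℓ ω y₁ - ℓ ω y₂| ≤ κ * C * |y₁ - y₂|)
    {η₁ η₂ : Ω → ℝ} (hη₁ : Integrable η₁ μ) (hη₂ : Integrable η₂ μ) :
    μ.real Set.univ * |Lop μ ℓ η₁ - Lop μ ℓ η₂| ≤ κ * ∫ ω, |η₁ ω - η₂ ω| ∂μ := by
  rcases eq_zero_or_neZero μ with rfl | hμ
  · simp
  have hshift {η : Ω → ℝ} (hη : Integrable η μ) (x : ℝ) : Integrable (fun ω ↦ x + η ω) μ :=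
    (integrable_const x).add hη
  have hlip (ω : Ω) (y z : ℝ) : ‖ℓ ω y - ℓ ω z‖ ≤ κ * C * ‖y - z‖ := (hbilip ω y z).2
  have hint {η : Ω → ℝ} (hη : Integrable η μ) (x : ℝ) : Integrable (fun ω ↦ ℓ ω (x + η ω)) μ :=
    integrable_comp_of_norm_sub_le hmeas.stronglyMeasurable hzero hlip (hshift hη x)
  have hslope (ω : Ω) := mul_sub_le_sub_of_mul_abs_sub_le (hmono ω) fun y z ↦ (hbilip ω y z).1
  have hclose (x : ℝ) : |∫ ω, ℓ ω (x + η₁ ω) ∂μ - ∫ ω, ℓ ω (x + η₂ ω) ∂μ| ≤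
      κ * C * ∫ ω, |η₁ ω - η₂ ω| ∂μ := by
    simpa only [add_sub_add_left_eq_sub, Real.norm_eq_abs] using
      norm_integral_comp_sub_integral_comp_le hlip
        ((hshift hη₁ x).sub (hshift hη₂ x)) (hint hη₁ x) (hint hη₂ x)
  have hmass : 0 < μ.real Set.univ := measureReal_univ_pos
  have hdist : |Lop μ ℓ η₁ - Lop μ ℓ η₂| ≤
      κ * C * (∫ ω, |η₁ ω - η₂ ω| ∂μ) / (C * μ.real Set.univ) :=
    abs_firstNonneg_sub_firstNonneg_le (mul_pos hC hmass)
      (mul_sub_le_integral_sub_integral hslope (hint hη₁))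
      (mul_sub_le_integral_sub_integral hslope (hint hη₂)) hclose
  rw [le_div_iff₀ (mul_pos hC hmass)] at hdist
  exact le_of_mul_le_mul_left (by linarith) hC

end FiniteMeasure

/-- Lipschitz estimate for `L`: for all integrable `η¹, η²`,
`|L(η¹) − L(η²)| ≤ κ 𝐄[|η¹ − η²|]`. -/
theorem stmt2 {Ω : Type*} [MeasurableSpace Ω] (P : Measure Ω) [IsProbabilityMeasure P]
    (ℓ : Ω → ℝ → ℝ)
    (hmeas : Measurable (fun p : Ω × ℝ => ℓ p.1 p.2))
    (hcont : ∀ ω, Continuous (fun y => ℓ ω y))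
    (hmono : ∀ ω, StrictMono (fun y => ℓ ω y))
    (L₀ : ℝ) (hL₀ : 0 < L₀)
    (hgrowth : ∀ ω y, |ℓ ω y| ≤ L₀ * (1 + |y|))
    (l : EReal) (hl : 0 < l)
    (hlim : Tendsto (fun x : ℝ => ((∫ ω, ℓ ω x ∂P : ℝ) : EReal)) atTop (𝓝 l))
    (κ C : ℝ) (hκ : 1 < κ) (hC : 0 < C)
    (hbilip : ∀ ω y₁ y₂, C * |y₁ - y₂| ≤ |ℓ ω y₁ - ℓ ω y₂| ∧
      |ℓ ω y₁ - ℓ ω y₂| ≤ κ * C * |y₁ - y₂|)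
    (η₁ η₂ : Ω → ℝ) (hη₁ : Integrable η₁ P) (hη₂ : Integrable η₂ P) :
    |Lop P ℓ η₁ - Lop P ℓ η₂| ≤ κ * ∫ ω, |η₁ ω - η₂ ω| ∂P := by
  have hzero : Integrable (ℓ · 0) P := .of_bound
    (hmeas.comp measurable_prodMk_right).aestronglyMeasurable (L₀ * (1 + |0|))
    (.of_forall fun ω ↦ hgrowth ω 0)
  simpa using stmt2_general hmeas (fun ω ↦ (hmono ω).monotone) hzero hC hbilip hη₁ hη₂
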